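/- There exist ε > 0 and C > 0 such that for every Δt ∈ (0, ε) and every i ∈ {1,…,k}, the quantities B_i(Δt) := (1−ρ_iΔt)β_i(Δt)(2(1−λ(Δt)β_Σ(Δt)) − β_i(Δt)(A_i(Δt)+γ_iΔt)) and D_i(Δt) := (1−ρ_iΔt)B_i(Δt)σ_S²/(2ρ_i) satisfy |B_i(Δt) − ((2/(k^{1/2}(1+k)))(σ_K/σ_S) + (1/(2k^{3/4}(1+k)^{3/2}))·[(2+6k)(1/k)Σ_{j=1}^k γ_j^{1/2} − 5(1+k)γ_i^{1/2}]·(σ_K/σ_S)^{3/2}·√Δt)| ≤ C·Δt and |D_i(Δt) − ((1/(k^{1/2}(1+k)))·σ_Sσ_K/ρ_i + (1/(4k^{3/4}(1+k)^{3/2}))·[(2+6k)(1/k)Σ_{j=1}^k γ_j^{1/2} − 5(1+k)γ_i^{1/2}]·σ_S^{1/2}σ_K^{3/2}·√Δt/ρ_i)| ≤ C·Δt. -/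

import Mathlib

/-!
With `s = σ_K / σ_S`, `u = β_Σ / s`, `x i = β_i β_Σ / s ^ 2`, `p i = 1 - ρ_i Δt` and `c i = γ_i s`,
the constrained system becomes `(1 - x i) (1 - p i x i) = c i Δt (u + u⁻¹) x i`, `∑ i, x i = u ^ 2`,
`0 < x i ≤ 1`. For given `u` each quadratic has an explicit root in `(0, 1]`, and the intermediate
value theorem in `u` yields a solution. It is unique because the shares `x i / u ^ 2` of two
solutions both sum to `1`, so one of them is at least as large in the solution with the larger `u`,
which contradicts the quadratic for that trader unless the two solutions agree.

Rewriting the quadratic as `(1 - x i) ^ 2 = O(Δt)` and dividing by `Δt` gives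
`(1 - x i) / √Δt = √(c i (√k + 1 / √k)) + O(√Δt)`, hence expansions of `x i` and `u` up to `O(Δt)`.
In these variables `φ_i = 1 - x i`, `1 - λ β_Σ = 1 / (1 + u ^ 2)` and
`A_i + γ_i Δt = γ_i Δt / (1 - p i x i ^ 2)`, so the expansions of `B_i` and `D_i` follow from those
of `x i` and `u`.
-/

open Filter Topology Asymptotics

lemma sq_sqrt_eventuallyEq : (√· ^ 2) =ᶠ[𝓝[>] 0] fun t : ℝ => t :=
  eventually_mem_nhdsWithin.mono fun _ ht => Real.sq_sqrt (Set.mem_Ioi.1 ht).le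

lemma tendsto_sqrt_nhdsGT_zero : Tendsto (√·) (𝓝[>] 0) (𝓝 0) := by
  simpa using (Real.continuous_sqrt.tendsto 0).mono_left nhdsWithin_le_nhds

lemma id_isBigO_sqrt : (fun t : ℝ => t) =O[𝓝[>] 0] (√·) := by
  have h_mul := (isBigO_refl (√·) (𝓝[>] 0)).mul (tendsto_sqrt_nhdsGT_zero.isBigO_one ℝ)
  refine h_mul.congr' ?_ (.of_forall fun t => mul_one _)
  simpa only [sq] using sq_sqrt_eventuallyEq

lemma isBigO_comp_sub_of_differentiableAt {α E F : Type*} [NormedAddCommGroup E] [NormedSpace ℝ E]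
    [NormedAddCommGroup F] [NormedSpace ℝ F] {l : Filter α} {f : α → E} {g : α → ℝ} {G : E → F}
    {a : E} (hG : DifferentiableAt ℝ G a) (hf : (fun t => f t - a) =O[l] g)
    (hg : Tendsto g l (𝓝 0)) : (fun t => G (f t) - G a) =O[l] g :=
  (hG.isBigO_sub.comp_tendsto (tendsto_sub_nhds_zero_iff.1 (hf.trans_tendsto hg))).trans hf

lemma isBigO_sub_affine_of_analyticAt {g : ℝ → ℝ} {g' a : ℝ} (hg : AnalyticAt ℝ g a)
    (hg' : HasDerivAt g g' a) :
    (fun y => g y - (g a + g' * (y - a))) =O[𝓝 a] fun y => (y - a) ^ 2 := by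
  obtain ⟨p, hp⟩ := hg
  have h_sub : Tendsto (fun y => y - a) (𝓝 a) (𝓝 0) :=
    tendsto_sub_nhds_zero_iff.2 tendsto_id
  have h_coeff_zero : p.coeff 0 = g a := hp.coeff_zero _
  have h_coeff_one : p.coeff 1 = g' := hp.hasDerivAt.unique hg'
  refine ((hp.isBigO_sub_partialSum_pow 2).comp_tendsto h_sub).congr (fun y => ?_) fun y => ?_
  · simp [FormalMultilinearSeries.partialSum, Finset.sum_range_succ, h_coeff_zero, h_coeff_one,
      mul_comm]
  · simp

/-- `f t = a + b √t + O(t)` as `t → 0⁺`. The expansions of the theorem are in powers of `√t`, where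
`t` is the length of a trading period, so `√t` is built in as the small parameter. -/
def HasSqrtExpansion (f : ℝ → ℝ) (a b : ℝ) : Prop :=
  (fun t => f t - (a + b * √t)) =O[𝓝[>] 0] fun t => t

lemma hasSqrtExpansion_iff_slope {f : ℝ → ℝ} {a b : ℝ} :
    HasSqrtExpansion f a b ↔ (fun t => (f t - a) / √t - b) =O[𝓝[>] 0] (√·) := by
  have h_pos : ∀ᶠ t : ℝ in 𝓝[>] 0, 0 < √t :=
    eventually_mem_nhdsWithin.mono fun t ht => Real.sqrt_pos.2 ht
  constructor <;> intro h
  · refine ((isBigO_refl (fun t : ℝ => (√t)⁻¹) (𝓝[>] 0)).mul h).congr' ?_ ?_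
    · filter_upwards [h_pos] with t ht
      field_simp
      ring
    · exact .of_forall fun t => (inv_mul_eq_div _ _).trans Real.div_sqrt
  · refine ((isBigO_refl (√·) (𝓝[>] 0)).mul h).congr' ?_ ?_
    · filter_upwards [h_pos] with t ht
      field_simp
      ring
    · simpa only [sq] using sq_sqrt_eventuallyEq

namespace HasSqrtExpansion

variable {f g : ℝ → ℝ} {a b a' b' : ℝ}

lemma sub_isBigO_sqrt (hf : HasSqrtExpansion f a b) : (fun t => f t - a) =O[𝓝[>] 0] (√·) :=
  ((hf.trans id_isBigO_sqrt).add (isBigO_const_mul_self b (√·) _)).congr_left fun t => by ring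

lemma tendsto (hf : HasSqrtExpansion f a b) : Tendsto f (𝓝[>] 0) (𝓝 a) :=
  tendsto_sub_nhds_zero_iff.1 (hf.sub_isBigO_sqrt.trans_tendsto tendsto_sqrt_nhdsGT_zero)

lemma congr' (hf : HasSqrtExpansion f a b) (h : f =ᶠ[𝓝[>] 0] g) : HasSqrtExpansion g a b :=
  IsBigO.congr' hf (h.sub .rfl) .rfl

lemma const (a : ℝ) : HasSqrtExpansion (fun _ => a) a 0 := by
  simpa [HasSqrtExpansion] using isBigO_zero _ _

lemma one_sub_const_mul (c : ℝ) : HasSqrtExpansion (fun t => 1 - c * t) 1 0 := by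
  simpa [HasSqrtExpansion] using isBigO_const_mul_self c (fun t : ℝ => t) _

lemma add (hf : HasSqrtExpansion f a b) (hg : HasSqrtExpansion g a' b') :
    HasSqrtExpansion (fun t => f t + g t) (a + a') (b + b') :=
  (IsBigO.add hf hg).congr_left fun t => by ring

lemma sub (hf : HasSqrtExpansion f a b) (hg : HasSqrtExpansion g a' b') :
    HasSqrtExpansion (fun t => f t - g t) (a - a') (b - b') :=
  (IsBigO.sub hf hg).congr_left fun t => by ring

lemma sum {ι : Type*} {s : Finset ι} {f : ι → ℝ → ℝ} {a b : ι → ℝ}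
    (h : ∀ i ∈ s, HasSqrtExpansion (f i) (a i) (b i)) :
    HasSqrtExpansion (fun t => ∑ i ∈ s, f i t) (∑ i ∈ s, a i) (∑ i ∈ s, b i) :=
  (IsBigO.fun_sum h).congr_left fun t => by
    simp only [Finset.sum_sub_distrib, Finset.sum_add_distrib, Finset.sum_mul]

lemma mul (hf : HasSqrtExpansion f a b) (hg : HasSqrtExpansion g a' b') :
    HasSqrtExpansion (fun t => f t * g t) (a * a') (b * a' + a * b') := by
  have h_cross : (fun t => (f t - a) * (g t - a')) =O[𝓝[>] 0] fun t => t :=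
    (hf.sub_isBigO_sqrt.mul hg.sub_isBigO_sqrt).congr' .rfl <| by
      simpa only [sq] using sq_sqrt_eventuallyEq
  exact ((h_cross.add (hf.const_mul_left a')).add (hg.const_mul_left a)).congr_left fun t => by ring

lemma comp {G : ℝ → ℝ} {G' : ℝ} (hf : HasSqrtExpansion f a b) (hG : AnalyticAt ℝ G a)
    (hG' : HasDerivAt G G' a) : HasSqrtExpansion (fun t => G (f t)) (G a) (G' * b) := by
  have h_sq : (fun t => (f t - a) ^ 2) =O[𝓝[>] 0] fun t => t :=
    (hf.sub_isBigO_sqrt.pow 2).congr' .rfl sq_sqrt_eventuallyEq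
  have h_taylor : (fun t => G (f t) - (G a + G' * (f t - a))) =O[𝓝[>] 0] fun t => t :=
    ((isBigO_sub_affine_of_analyticAt hG hG').comp_tendsto hf.tendsto).trans h_sq
  exact (h_taylor.add (hf.const_mul_left G')).congr_left fun t => by ring

lemma div (hf : HasSqrtExpansion f a b) (hg : HasSqrtExpansion g a' b') (ha' : a' ≠ 0) :
    HasSqrtExpansion (fun t => f t / g t) (a / a') ((b * a' - a * b') / a' ^ 2) := by
  simp only [div_eq_mul_inv (_ : ℝ)]
  convert hf.mul (hg.comp (analyticAt_inv ha') (hasDerivAt_inv ha')) using 1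
  field_simp
  ring

lemma sqrt (hf : HasSqrtExpansion f a b) (ha : a ≠ 0) :
    HasSqrtExpansion (fun t => √(f t)) (√a) (b / (2 * √a)) := by
  convert hf.comp (Real.contDiffAt_sqrt ha).analyticAt (Real.hasDerivAt_sqrt ha) using 1
  ring

lemma const_mul_self_div (hg : HasSqrtExpansion g 0 b) (hb : b ≠ 0) (c : ℝ) :
    HasSqrtExpansion (fun t => c * t / g t) 0 (c / b) := by
  have h_slope : (fun t => g t / √t - b) =O[𝓝[>] 0] (√·) := by
    simpa only [sub_zero] using hasSqrtExpansion_iff_slope.1 hg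
  have h_div : DifferentiableAt ℝ (fun y => c / y) b := by fun_prop (disch := exact hb)
  refine hasSqrtExpansion_iff_slope.2 <| (isBigO_comp_sub_of_differentiableAt h_div h_slope
    tendsto_sqrt_nhdsGT_zero).congr_left fun t => ?_
  rw [sub_zero, div_div_eq_mul_div, div_right_comm, mul_div_assoc c t, Real.div_sqrt]

lemma exists_forall_abs_sub_le {ι : Type*} [Finite ι] {f : ι → ℝ → ℝ} {a b : ι → ℝ}
    (h : ∀ i, HasSqrtExpansion (f i) (a i) (b i)) :
    ∃ C > 0, ∀ᶠ t in 𝓝[>] 0, ∀ i, |f i t - (a i + b i * √t)| ≤ C * t := by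
  cases nonempty_fintype ι
  obtain ⟨C, hC, h_bound⟩ := (isBigO_pi.2 h).exists_pos
  refine ⟨C, hC, ?_⟩
  filter_upwards [h_bound.bound, self_mem_nhdsWithin] with t ht ht_pos i
  rw [Real.norm_of_nonneg (Set.mem_Ioi.1 ht_pos).le] at ht
  exact (norm_le_pi_norm (fun i => f i t - (a i + b i * √t)) i).trans ht

end HasSqrtExpansion

lemma eventually_forall_mul_le_one {ι : Type*} [Finite ι] (ρ : ι → ℝ) :
    ∀ᶠ t in 𝓝[>] (0 : ℝ), ∀ i, ρ i * t ≤ 1 := by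
  refine eventually_all.2 fun i => ?_
  filter_upwards [(HasSqrtExpansion.one_sub_const_mul (ρ i)).tendsto.eventually_const_lt one_pos]
    with t ht
  linarith

/-- The root in `(0, 1]` of `(1 - x) (1 - p x) = h x`, rationalised so that it stays meaningful when
the leading coefficient `p` vanishes. -/
noncomputable def smallRoot (p h : ℝ) : ℝ := 2 / (1 + p + h + √((1 + p + h) ^ 2 - 4 * p))

section smallRoot

variable {p h : ℝ}

lemma smallRoot_pos (hp : 0 ≤ p) (hh : 0 < h) : 0 < smallRoot p h := by
  unfold smallRoot
  positivity

lemma discriminant_nonneg (hp : 0 ≤ p) (hh : 0 < h) : 0 ≤ (1 + p + h) ^ 2 - 4 * p := by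
  nlinarith [sq_nonneg (1 - p), mul_nonneg hp hh.le]

lemma smallRoot_le_one (hp : 0 ≤ p) (hh : 0 < h) : smallRoot p h ≤ 1 := by
  have h_sqrt : 1 - p ≤ √((1 + p + h) ^ 2 - 4 * p) := by
    apply Real.le_sqrt_of_sq_le
    nlinarith [mul_nonneg hp hh.le]
  rw [smallRoot, div_le_one (by positivity)]
  linarith

lemma smallRoot_spec (hp : 0 ≤ p) (hh : 0 < h) :
    (1 - smallRoot p h) * (1 - p * smallRoot p h) = h * smallRoot p h := by
  have h_sq := Real.sq_sqrt (discriminant_nonneg hp hh)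
  unfold smallRoot
  have h_den : 0 < 1 + p + h + √((1 + p + h) ^ 2 - 4 * p) := by positivity
  generalize √((1 + p + h) ^ 2 - 4 * p) = d at *
  field_simp
  linear_combination h_sq

lemma inv_le_smallRoot (hp : 0 ≤ p) (hh : 0 < h) : (1 + p + h)⁻¹ ≤ smallRoot p h := by
  have h_sqrt : √((1 + p + h) ^ 2 - 4 * p) ≤ 1 + p + h :=
    Real.sqrt_le_iff.2 ⟨by positivity, by linarith⟩
  rw [smallRoot, ← one_div, div_le_div_iff₀ (by positivity) (by positivity)]
  linarith

lemma exists_sq_le_smallRoot (hp : 0 ≤ p) (hh : 0 < h) :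
    ∃ a, 0 < a ∧ a ≤ 1 ∧ a ^ 2 ≤ smallRoot p (h * (a + a⁻¹)) := by
  obtain ⟨a, ha_pos, ha⟩ : ∃ a : ℝ, 0 < a ∧ a * (1 + p + 2 * h) = 1 :=
    ⟨(1 + p + 2 * h)⁻¹, by positivity, inv_mul_cancel₀ (by positivity)⟩
  have ha_le : a ≤ 1 := by nlinarith [mul_nonneg ha_pos.le hp, mul_pos ha_pos hh]
  refine ⟨a, ha_pos, ha_le, le_trans ?_ (inv_le_smallRoot hp (by positivity))⟩
  rw [← one_div, le_div_iff₀ (by positivity)]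
  calc a ^ 2 * (1 + p + h * (a + a⁻¹)) = a * (a * (1 + p) + h * (a ^ 2 + 1)) := by field_simp
    _ ≤ a * (1 * (1 + p) + h * (1 ^ 2 + 1)) := by gcongr
    _ = 1 := by linear_combination ha

lemma continuousOn_smallRoot_comp {g : ℝ → ℝ} {S : Set ℝ} (hp : 0 ≤ p) (hg : ContinuousOn g S)
    (hpos : ∀ u ∈ S, 0 < g u) : ContinuousOn (fun u => smallRoot p (g u)) S := by
  unfold smallRoot
  refine continuousOn_const.div (by fun_prop) fun u hu => ?_
  have := hpos u hu
  positivity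

end smallRoot

/-- The equilibrium system in the dimensionless unknowns `u = β_Σ / s` and `x i = β_i β_Σ / s ^ 2`,
where `s = σ_K / σ_S`; the data enter through `c i = γ_i s`. -/
structure IsNormalizedEquilibrium {ι : Type*} [Fintype ι] (c ρ : ι → ℝ) (t u : ℝ) (x : ι → ℝ) :
    Prop where
  pos : 0 < u
  mem_Ioc : ∀ i, x i ∈ Set.Ioc 0 1
  eq : ∀ i, (1 - x i) * (1 - (1 - ρ i * t) * x i) = c i * t * (u + u⁻¹) * x i
  sum_eq : ∑ i, x i = u ^ 2

lemma eq_of_div_sq_le_div_sq {p g u u' x x' : ℝ} (hp : 0 ≤ p) (hg : 0 < g) (hu : 0 < u)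
    (huu' : u ≤ u') (hx_le : x ≤ 1) (hx' : x' ∈ Set.Ioc 0 1)
    (h : (1 - x) * (1 - p * x) = g * (u + u⁻¹) * x)
    (h' : (1 - x') * (1 - p * x') = g * (u' + u'⁻¹) * x') (hle : x / u ^ 2 ≤ x' / u' ^ 2) :
    u = u' ∧ x = x' := by
  obtain ⟨hx'_pos, hx'_le⟩ := hx'
  have hu' : 0 < u' := hu.trans_le huu'
  have h_cross : x * u' ^ 2 ≤ x' * u ^ 2 := (div_le_div_iff₀ (by positivity) (by positivity)).1 hle
  have hxx' : x ≤ x' := by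
    refine le_of_mul_le_mul_right (h_cross.trans ?_) (pow_pos hu' 2)
    gcongr
  have h_factor : 0 < 1 - p * x' :=
    pos_of_mul_pos_right (h' ▸ by positivity) (sub_nonneg.2 hx'_le)
  have h_anti : (1 - x') * (1 - p * x') ≤ (1 - x) * (1 - p * x) := by gcongr
  have h_rhs : (u' + u'⁻¹) * x' ≤ (u + u⁻¹) * x := by
    refine le_of_mul_le_mul_left ?_ hg
    linarith
  have h_cubic : u' ^ 3 + u' ≤ u ^ 3 + u := by
    refine le_of_mul_le_mul_right ?_ hx'_pos
    calc (u' ^ 3 + u') * x' = (u' + u'⁻¹) * x' * u' ^ 2 := by field_simp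
      _ ≤ (u + u⁻¹) * x * u' ^ 2 := by gcongr
      _ = (u + u⁻¹) * (x * u' ^ 2) := by ring
      _ ≤ (u + u⁻¹) * (x' * u ^ 2) := by gcongr
      _ = (u ^ 3 + u) * x' := by field_simp
  obtain rfl : u = u' := by
    refine le_antisymm huu' (le_of_not_gt fun hlt => h_cubic.not_gt ?_)
    gcongr
  exact ⟨rfl, le_antisymm hxx' <| le_of_mul_le_mul_left h_rhs (by positivity)⟩

section NormalizedEquilibrium

variable {ι : Type*} [Fintype ι] {c ρ : ι → ℝ} {t u u' : ℝ} {x x' : ι → ℝ}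

lemma exists_isNormalizedEquilibrium [Nonempty ι] (hc : ∀ i, 0 < c i) (ht : 0 < t)
    (hρ : ∀ i, ρ i * t ≤ 1) : ∃ u x, IsNormalizedEquilibrium c ρ t u x := by
  have hp : ∀ i, 0 ≤ 1 - ρ i * t := fun i => sub_nonneg.2 (hρ i)
  have hct : ∀ i, 0 < c i * t := fun i => mul_pos (hc i) ht
  have hh : ∀ i u, 0 < u → 0 < c i * t * (u + u⁻¹) := fun i u hu => by
    have := hct i
    positivity
  let X (u : ℝ) (i : ι) : ℝ := smallRoot (1 - ρ i * t) (c i * t * (u + u⁻¹))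
  have h_card : (1 : ℝ) ≤ √(Fintype.card ι) :=
    Real.one_le_sqrt.2 (by exact_mod_cast Fintype.card_pos)
  let j := Classical.arbitrary ι
  obtain ⟨a, ha_pos, ha_le, ha⟩ := exists_sq_le_smallRoot (hp j) (hct j)
  have h_pos : ∀ u ∈ Set.Icc a √(Fintype.card ι), 0 < u := fun u hu => ha_pos.trans_le hu.1
  have h_cont : ContinuousOn (fun u => ∑ i, X u i - u ^ 2) (Set.Icc a √(Fintype.card ι)) := by
    refine (continuousOn_finsetSum _ fun i _ => ?_).sub (by fun_prop)
    refine continuousOn_smallRoot_comp (hp i) ?_ fun u hu => hh i u (h_pos u hu)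
    exact continuousOn_const.mul
      (continuousOn_id.add (continuousOn_id.inv₀ fun u hu => (h_pos u hu).ne'))
  have h_left : 0 ≤ ∑ i, X a i - a ^ 2 := sub_nonneg.2 <| ha.trans <|
    Finset.single_le_sum (fun i _ => (smallRoot_pos (hp i) (hh i a ha_pos)).le) (Finset.mem_univ j)
  have h_right : ∑ i, X √(Fintype.card ι) i - √(Fintype.card ι) ^ 2 ≤ 0 := by
    rw [sub_nonpos, Real.sq_sqrt (Nat.cast_nonneg _), ← nsmul_one]
    exact Finset.sum_le_card_nsmul _ _ _ fun i _ => smallRoot_le_one (hp i) (hh i _ (by positivity))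
  obtain ⟨u, hu, hu_sum⟩ := intermediate_value_Icc' (ha_le.trans h_card) h_cont ⟨h_right, h_left⟩
  have hu_pos : 0 < u := h_pos u hu
  exact ⟨u, X u, hu_pos, fun i => ⟨smallRoot_pos (hp i) (hh i u hu_pos),
    smallRoot_le_one (hp i) (hh i u hu_pos)⟩, fun i => smallRoot_spec (hp i) (hh i u hu_pos),
    sub_eq_zero.1 hu_sum⟩

namespace IsNormalizedEquilibrium

lemma sum_div_sq (h : IsNormalizedEquilibrium c ρ t u x) : ∑ i, x i / u ^ 2 = 1 := by
  rw [← Finset.sum_div, h.sum_eq, div_self (pow_pos h.pos 2).ne']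

lemma unique [Nonempty ι] (h : IsNormalizedEquilibrium c ρ t u x)
    (h' : IsNormalizedEquilibrium c ρ t u' x') (hc : ∀ i, 0 < c i) (ht : 0 < t)
    (hρ : ∀ i, ρ i * t ≤ 1) : u = u' ∧ x = x' := by
  wlog huu' : u ≤ u' generalizing u u' x x'
  · exact (this h' h (le_of_not_ge huu')).imp Eq.symm Eq.symm
  have hp : ∀ i, 0 ≤ 1 - ρ i * t := fun i => sub_nonneg.2 (hρ i)
  have hg : ∀ i, 0 < c i * t := fun i => mul_pos (hc i) ht
  obtain ⟨i, -, hi⟩ := Finset.exists_le_of_sum_le Finset.univ_nonempty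
    (h.sum_div_sq.trans h'.sum_div_sq.symm).le
  obtain rfl : u = u' := (eq_of_div_sq_le_div_sq (hp i) (hg i) h.pos huu' (h.mem_Ioc i).2
    (h'.mem_Ioc i) (h.eq i) (h'.eq i) hi).1
  refine ⟨rfl, funext fun j => ?_⟩
  rcases le_total (x j / u ^ 2) (x' j / u ^ 2) with hj | hj
  · exact (eq_of_div_sq_le_div_sq (hp j) (hg j) h.pos le_rfl (h.mem_Ioc j).2 (h'.mem_Ioc j) (h.eq j)
      (h'.eq j) hj).2
  · exact (eq_of_div_sq_le_div_sq (hp j) (hg j) h.pos le_rfl (h'.mem_Ioc j).2 (h.mem_Ioc j)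
      (h'.eq j) (h.eq j) hj).2.symm

lemma le_sqrt_card (h : IsNormalizedEquilibrium c ρ t u x) : u ≤ √(Fintype.card ι) := by
  refine Real.le_sqrt_of_sq_le ?_
  rw [← h.sum_eq, ← nsmul_one]
  exact Finset.sum_le_card_nsmul _ _ _ fun i _ => (h.mem_Ioc i).2

lemma one_sub_sq (h : IsNormalizedEquilibrium c ρ t u x) (i : ι) :
    (1 - x i) ^ 2 = (c i * (u + u⁻¹) * x i - ρ i * x i * (1 - x i)) * t := by
  linear_combination h.eq i

lemma one_sub_le (h : IsNormalizedEquilibrium c ρ t u x) (hc : ∀ i, 0 < c i) (ht : 0 < t) (i : ι) :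
    1 - x i ≤ √(2 * c i * √(Fintype.card ι) + |ρ i|) * √t := by
  obtain ⟨hx_pos, hx_le⟩ := h.mem_Ioc i
  have hci := hc i
  have hx_sq : x i ≤ u ^ 2 := h.sum_eq ▸
    Finset.single_le_sum (fun j _ => (h.mem_Ioc j).1.le) (Finset.mem_univ i)
  have hu := h.pos
  have h_sum : (u + u⁻¹) * x i ≤ 2 * √(Fintype.card ι) := by
    calc (u + u⁻¹) * x i = u * x i + u⁻¹ * x i := add_mul _ _ _
      _ ≤ u * 1 + u⁻¹ * u ^ 2 := by gcongr
      _ = 2 * u := by field_simp; norm_num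
      _ ≤ 2 * √(Fintype.card ι) := by gcongr; exact h.le_sqrt_card
  have h_ρ : -(ρ i * x i * (1 - x i)) ≤ |ρ i| := by
    have h_abs : |x i * (1 - x i)| ≤ 1 := by
      rw [abs_of_nonneg (mul_nonneg hx_pos.le (sub_nonneg.2 hx_le))]
      nlinarith
    calc -(ρ i * x i * (1 - x i)) ≤ |ρ i * x i * (1 - x i)| := neg_le_abs _
      _ = |ρ i| * |x i * (1 - x i)| := by rw [mul_assoc, abs_mul]
      _ ≤ |ρ i| := mul_le_of_le_one_right (abs_nonneg _) h_abs
  rw [← Real.sqrt_mul (by positivity)]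
  refine Real.le_sqrt_of_sq_le ?_
  rw [h.one_sub_sq i]
  gcongr
  nlinarith

end IsNormalizedEquilibrium

end NormalizedEquilibrium

/-- The limit of `(1 - x i) / √t` as `t → 0⁺`, for `x` a normalized equilibrium among `n` traders
and `c` the value of `c i`. -/
noncomputable def responseSlope (n c : ℝ) : ℝ := √(c * (√n + (√n)⁻¹))

lemma responseSlope_pos {n c : ℝ} (hn : 0 < n) (hc : 0 < c) : 0 < responseSlope n c := by
  unfold responseSlope
  positivity

/-- The linear form of the first-order coefficients, applied to `√γ` or to the response slopes. -/
noncomputable def slopeForm {ι : Type*} [Fintype ι] (y : ι → ℝ) (i : ι) : ℝ :=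
  (2 + 6 * Fintype.card ι) * ((∑ j, y j) / Fintype.card ι) - 5 * (1 + Fintype.card ι) * y i

lemma slopeForm_mul {ι : Type*} [Fintype ι] (y : ι → ℝ) (r : ℝ) (i : ι) :
    slopeForm (fun j => y j * r) i = slopeForm y i * r := by
  simp only [slopeForm, ← Finset.sum_mul]
  ring

/-- The value coefficient `B i` in terms of the normalized equilibrium; its last factor stands for
`A i + γ i * t`. -/
noncomputable def normalizedValueCoeff (s γ ρ t u x : ℝ) : ℝ :=
  (1 - ρ * t) * (s * x / u) *
    (2 / (1 + u ^ 2) - s * x / u * (γ * t / (1 - (1 - ρ * t) * x ^ 2)))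

section SmallPeriod

variable {ι : Type*} [Fintype ι] {c ρ : ι → ℝ} {u : ℝ → ℝ} {x : ℝ → ι → ℝ}

lemma exists_eventually_isNormalizedEquilibrium [Nonempty ι] (hc : ∀ i, 0 < c i) (ρ : ι → ℝ) :
    ∃ (u : ℝ → ℝ) (x : ℝ → ι → ℝ), ∀ᶠ t in 𝓝[>] 0, IsNormalizedEquilibrium c ρ t (u t) (x t) := by
  have h_exists : ∀ᶠ t in 𝓝[>] 0, ∃ q : ℝ × (ι → ℝ), IsNormalizedEquilibrium c ρ t q.1 q.2 := by
    filter_upwards [self_mem_nhdsWithin, eventually_forall_mul_le_one ρ] with t ht hρt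
    exact Prod.exists.2 (exists_isNormalizedEquilibrium hc ht hρt)
  obtain ⟨q, hq⟩ := h_exists.choice
  exact ⟨fun t => (q t).1, fun t => (q t).2, hq⟩

namespace IsNormalizedEquilibrium

lemma isBigO_sub_one (h : ∀ᶠ t in 𝓝[>] 0, IsNormalizedEquilibrium c ρ t (u t) (x t))
    (hc : ∀ i, 0 < c i) (i : ι) : (fun t => x t i - 1) =O[𝓝[>] 0] (√·) := by
  refine .of_bound (√(2 * c i * √(Fintype.card ι) + |ρ i|)) ?_
  filter_upwards [h, self_mem_nhdsWithin] with t ht ht_pos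
  rw [Real.norm_of_nonneg (Real.sqrt_nonneg t), Real.norm_eq_abs, abs_sub_comm,
    abs_of_nonneg (sub_nonneg.2 (ht.mem_Ioc i).2)]
  exact ht.one_sub_le hc ht_pos i

variable [Nonempty ι]

lemma isBigO_sub_sqrt_card (h : ∀ᶠ t in 𝓝[>] 0, IsNormalizedEquilibrium c ρ t (u t) (x t))
    (hc : ∀ i, 0 < c i) : (fun t => u t - √(Fintype.card ι)) =O[𝓝[>] 0] (√·) := by
  have h_sum : (fun t => ∑ i, x t i - Fintype.card ι) =O[𝓝[>] 0] (√·) :=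
    (IsBigO.fun_sum fun i (_ : i ∈ Finset.univ) => isBigO_sub_one h hc i).congr_left
      fun t => by simp
  have h_sqrt : DifferentiableAt ℝ (√·) (Fintype.card ι : ℝ) :=
    differentiableAt_id.sqrt (Nat.cast_ne_zero.2 Fintype.card_ne_zero)
  refine (isBigO_comp_sub_of_differentiableAt h_sqrt h_sum tendsto_sqrt_nhdsGT_zero).congr' ?_ .rfl
  filter_upwards [h] with t ht
  rw [ht.sum_eq, Real.sqrt_sq ht.pos.le]

lemma hasSqrtExpansion_response
    (h : ∀ᶠ t in 𝓝[>] 0, IsNormalizedEquilibrium c ρ t (u t) (x t)) (hc : ∀ i, 0 < c i) (i : ι) :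
    HasSqrtExpansion (fun t => x t i) 1 (-responseSlope (Fintype.card ι) (c i)) := by
  let G (q : ℝ × ℝ) : ℝ := √(c i * (q.1 + q.1⁻¹) * q.2 - ρ i * q.2 * (1 - q.2))
  have h_card : (0 : ℝ) < √(Fintype.card ι) := Real.sqrt_pos.2 (Nat.cast_pos.2 Fintype.card_pos)
  have hG : DifferentiableAt ℝ G (√(Fintype.card ι), 1) := by
    have := hc i
    refine DifferentiableAt.sqrt ?_ ?_
    · fun_prop (disch := exact h_card.ne')
    · simp only [mul_one, sub_self, mul_zero, sub_zero]
      positivity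
  have hG_val : G (√(Fintype.card ι), 1) = responseSlope (Fintype.card ι) (c i) := by
    simp [G, responseSlope]
  have hG_comp := isBigO_comp_sub_of_differentiableAt (f := fun t => (u t, x t i)) hG
    ((isBigO_sub_sqrt_card h hc).prod_left (isBigO_sub_one h hc i)) tendsto_sqrt_nhdsGT_zero
  refine hasSqrtExpansion_iff_slope.2 (hG_comp.neg_left.congr' ?_ .rfl)
  filter_upwards [h, self_mem_nhdsWithin] with t ht ht_pos
  have h_slope : G (u t, x t i) = (1 - x t i) / √t := by
    rw [eq_div_iff (Real.sqrt_pos.2 ht_pos).ne', ← Real.sqrt_mul' _ (Set.mem_Ioi.1 ht_pos).le,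
      ← ht.one_sub_sq i, Real.sqrt_sq (sub_nonneg.2 (ht.mem_Ioc i).2)]
  rw [h_slope, hG_val]
  ring

lemma hasSqrtExpansion_aggregate
    (h : ∀ᶠ t in 𝓝[>] 0, IsNormalizedEquilibrium c ρ t (u t) (x t)) (hc : ∀ i, 0 < c i) :
    HasSqrtExpansion u √(Fintype.card ι)
      (-(∑ j, responseSlope (Fintype.card ι) (c j)) / (2 * √(Fintype.card ι))) := by
  have h_sum := HasSqrtExpansion.sum fun i (_ : i ∈ Finset.univ) => hasSqrtExpansion_response h hc i
  simp only [Finset.sum_const, Finset.card_univ, nsmul_one, Finset.sum_neg_distrib] at h_sum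
  refine (h_sum.sqrt (Nat.cast_ne_zero.2 Fintype.card_ne_zero)).congr' ?_
  filter_upwards [h] with t ht
  rw [ht.sum_eq, Real.sqrt_sq ht.pos.le]

end IsNormalizedEquilibrium

lemma HasSqrtExpansion.inventoryCost {f : ℝ → ℝ} {z : ℝ} (hf : HasSqrtExpansion f 1 (-z))
    (hz : z ≠ 0) (γ ρ : ℝ) :
    HasSqrtExpansion (fun t => γ * t / (1 - (1 - ρ * t) * f t ^ 2)) 0 (γ / (2 * z)) := by
  refine HasSqrtExpansion.const_mul_self_div ?_ (mul_ne_zero two_ne_zero hz) γ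
  simp only [sq]
  convert (HasSqrtExpansion.const 1).sub ((HasSqrtExpansion.one_sub_const_mul ρ).mul (hf.mul hf))
    using 1 <;> ring

lemma HasSqrtExpansion.valueCoeff {f g : ℝ → ℝ} {r z Z : ℝ}
    (hg : HasSqrtExpansion g r (-Z / (2 * r))) (hr : 0 < r) (hf : HasSqrtExpansion f 1 (-z))
    (hz : z ≠ 0) (s γ ρ : ℝ) :
    HasSqrtExpansion (fun t => normalizedValueCoeff s γ ρ t (g t) (f t)) (2 * s / (r * (1 + r ^ 2)))
      (s * (Z / (2 * r ^ 3) - z / r) * (2 / (1 + r ^ 2)) +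
        s / r * (2 * Z / (1 + r ^ 2) ^ 2 - s * γ / (2 * z * r))) := by
  have h_demand := ((HasSqrtExpansion.const s).mul hf).div hg hr.ne'
  have h_impact := (HasSqrtExpansion.const 2).div ((HasSqrtExpansion.const 1).add (hg.mul hg))
    (by positivity)
  convert ((HasSqrtExpansion.one_sub_const_mul ρ).mul h_demand).mul
    (h_impact.sub (h_demand.mul (hf.inventoryCost hz γ ρ))) using 1
  · simp only [normalizedValueCoeff, sq]
  · field_simp
    ring
  · field_simp
    ring

lemma hasSqrtExpansion_normalizedValueCoeff_responseSlope [Nonempty ι] {γ : ι → ℝ} {s : ℝ}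
    (hs : 0 < s) (hγ : ∀ i, 0 < γ i)
    (h : ∀ᶠ t in 𝓝[>] 0, IsNormalizedEquilibrium (fun i => γ i * s) ρ t (u t) (x t)) (i : ι) :
    HasSqrtExpansion (fun t => normalizedValueCoeff s (γ i) (ρ i) t (u t) (x t i))
      (2 * s / (√(Fintype.card ι) * (1 + Fintype.card ι)))
      (s / (2 * √(Fintype.card ι) * (1 + Fintype.card ι) ^ 2) *
        slopeForm (fun j => responseSlope (Fintype.card ι) (γ j * s)) i) := by
  have hc : ∀ i, 0 < γ i * s := fun i => mul_pos (hγ i) hs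
  have h_card : (0 : ℝ) < Fintype.card ι := Nat.cast_pos.2 Fintype.card_pos
  have hr : 0 < √(Fintype.card ι : ℝ) := Real.sqrt_pos.2 h_card
  have hz := responseSlope_pos h_card (hc i)
  have hB := (IsNormalizedEquilibrium.hasSqrtExpansion_aggregate h hc).valueCoeff hr
    (IsNormalizedEquilibrium.hasSqrtExpansion_response h hc i) hz.ne' s (γ i) (ρ i)
  have h_sq : √(Fintype.card ι : ℝ) ^ 2 = Fintype.card ι := Real.sq_sqrt h_card.le
  have hz_sq : responseSlope (Fintype.card ι) (γ i * s) ^ 2 * √(Fintype.card ι) =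
      γ i * s * (1 + Fintype.card ι) := by
    rw [responseSlope, Real.sq_sqrt (by have := hc i; positivity)]
    field_simp
    rw [h_sq]
    ring
  convert hB using 1
  · rw [h_sq]
  · rw [slopeForm, h_sq]
    generalize √(Fintype.card ι : ℝ) = r at *
    generalize responseSlope (Fintype.card ι) (γ i * s) = z at *
    generalize ∑ j, responseSlope (Fintype.card ι) (γ j * s) = Z
    rw [← h_sq] at *
    field_simp
    linear_combination -(r + r ^ 3) * hz_sq

end SmallPeriod

lemma rpow_three_halves_eq_sqrt_pow {a : ℝ} (ha : 0 ≤ a) : a ^ (3 / 2 : ℝ) = √a ^ 3 := by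
  rw [Real.sqrt_eq_rpow, ← Real.rpow_mul_natCast ha]
  norm_num

lemma sqrt_mul_rpow_three_halves {σS σK : ℝ} (hσS : 0 < σS) (hσK : 0 < σK) :
    √σS * σK ^ (3 / 2 : ℝ) = (σK / σS) ^ (3 / 2 : ℝ) * σS ^ 2 := by
  rw [rpow_three_halves_eq_sqrt_pow hσK.le, rpow_three_halves_eq_sqrt_pow (by positivity),
    Real.sqrt_div hσK.le]
  have := Real.sqrt_pos.2 hσS
  nth_rw 3 [← Real.sq_sqrt hσS.le]
  field_simp

lemma responseSlope_mul {n γ : ℝ} (s : ℝ) (hγ : 0 ≤ γ) :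
    responseSlope n (γ * s) = √γ * responseSlope n s := by
  rw [responseSlope, mul_assoc, Real.sqrt_mul hγ, responseSlope]

lemma mul_responseSlope_eq {n s : ℝ} (hn : 0 < n) (hs : 0 < s) :
    s / (2 * √n * (1 + n) ^ 2) * responseSlope n s =
      1 / (2 * n ^ (3 / 4 : ℝ) * (1 + n) ^ (3 / 2 : ℝ)) * s ^ (3 / 2 : ℝ) := by
  have h_quarter : n ^ (3 / 4 : ℝ) = √√n ^ 3 := by
    rw [← rpow_three_halves_eq_sqrt_pow (Real.sqrt_nonneg n), Real.sqrt_eq_rpow,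
      ← Real.rpow_mul hn.le]
    norm_num
  have h_slope : responseSlope n s = √s * √(1 + n) / √√n := by
    rw [responseSlope, ← Real.sqrt_mul hs.le, ← Real.sqrt_div (by positivity)]
    congr 1
    field_simp
    rw [Real.sq_sqrt hn.le]
    ring
  have hs_sq := Real.sq_sqrt hs.le
  have hn_sq := Real.sq_sqrt (Real.sqrt_nonneg n)
  have hm_sq := Real.sq_sqrt (add_pos one_pos hn).le
  have hs_pos : 0 < √s := Real.sqrt_pos.2 hs
  have hn_pos : 0 < √√n := by positivity
  have hm_pos : 0 < √(1 + n) := by positivity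
  rw [h_quarter, h_slope, rpow_three_halves_eq_sqrt_pow hs.le,
    rpow_three_halves_eq_sqrt_pow (by positivity)]
  generalize √(1 + n) = m at *
  generalize √√n = κ at *
  generalize √s = a at *
  rw [← hs_sq, ← hn_sq, ← hm_sq]
  field_simp

/-- The constrained system of the theorem for the aggregate `β_Σ = q.1` and the strategies
`β = q.2`. -/
def IsEquilibrium {ι : Type*} [Fintype ι] (σS σK : ℝ) (γ ρ : ι → ℝ) (Δt : ℝ) (q : ℝ × (ι → ℝ)) :
    Prop :=
  q.1 = ∑ j, q.2 j ∧
    (∀ i, 0 = (1 - ρ i * Δt) * (q.2 i) ^ 2 * q.1 ^ 2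
        - (2 - ρ i * Δt + q.1 * γ i * Δt) * (σK / σS) ^ 2 * q.2 i * q.1
        + (σK / σS) ^ 4 * (1 - q.2 i * γ i * Δt)) ∧
    0 < q.1 ∧
    (∀ i, 0 < q.2 i * q.1 ∧ q.2 i * q.1 ≤ σK ^ 2 / σS ^ 2)

lemma normalized_equation_iff {s b β γ ρ t : ℝ} (hs : 0 < s) (hb : 0 < b) :
    (1 - β * b / s ^ 2) * (1 - (1 - ρ * t) * (β * b / s ^ 2)) =
        γ * s * t * (b / s + (b / s)⁻¹) * (β * b / s ^ 2) ↔
      0 = (1 - ρ * t) * β ^ 2 * b ^ 2 - (2 - ρ * t + b * γ * t) * s ^ 2 * β * b +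
        s ^ 4 * (1 - β * γ * t) := by
  have h_factor : (1 - ρ * t) * β ^ 2 * b ^ 2 - (2 - ρ * t + b * γ * t) * s ^ 2 * β * b +
      s ^ 4 * (1 - β * γ * t) = s ^ 4 * ((1 - β * b / s ^ 2) * (1 - (1 - ρ * t) * (β * b / s ^ 2)) -
        γ * s * t * (b / s + (b / s)⁻¹) * (β * b / s ^ 2)) := by
    field_simp
    ring
  rw [h_factor, zero_eq_mul, or_iff_right (by positivity), sub_eq_zero]

section Equilibrium

variable {ι : Type*} [Fintype ι] {σS σK Δt : ℝ} {γ ρ : ι → ℝ}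

lemma isEquilibrium_iff_isNormalizedEquilibrium (hσS : 0 < σS) (hσK : 0 < σK) {q : ℝ × (ι → ℝ)} :
    IsEquilibrium σS σK γ ρ Δt q ↔ IsNormalizedEquilibrium (fun i => γ i * (σK / σS)) ρ Δt
      (q.1 / (σK / σS)) fun i => q.2 i * q.1 / (σK / σS) ^ 2 := by
  obtain ⟨b, β⟩ := q
  have hs : 0 < σK / σS := div_pos hσK hσS
  rw [IsEquilibrium, ← div_pow]
  generalize σK / σS = s at *
  have h_pos : 0 < b / s ↔ 0 < b := div_pos_iff_of_pos_right hs
  have h_mem (i : ι) : β i * b / s ^ 2 ∈ Set.Ioc 0 1 ↔ 0 < β i * b ∧ β i * b ≤ s ^ 2 := by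
    rw [Set.mem_Ioc, div_pos_iff_of_pos_right (by positivity), div_le_one (by positivity)]
  have h_sum (hb : 0 < b) : ∑ i, β i * b / s ^ 2 = (b / s) ^ 2 ↔ b = ∑ j, β j := by
    rw [← Finset.sum_div, ← Finset.sum_mul, div_pow, div_left_inj' (by positivity), sq b,
      mul_left_inj' hb.ne', eq_comm]
  constructor
  · rintro ⟨h_agg, h_eq, hb, h_box⟩
    exact ⟨h_pos.2 hb, fun i => (h_mem i).2 (h_box i),
      fun i => (normalized_equation_iff hs hb).2 (h_eq i), (h_sum hb).2 h_agg⟩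
  · rintro ⟨hb, h_box, h_eq, h_agg⟩
    have hb := h_pos.1 hb
    exact ⟨(h_sum hb).1 h_agg, fun i => (normalized_equation_iff hs hb).1 (h_eq i), hb,
      fun i => (h_mem i).1 (h_box i)⟩

lemma IsNormalizedEquilibrium.isEquilibrium (hσS : 0 < σS) (hσK : 0 < σK) {u : ℝ} {x : ι → ℝ}
    (h : IsNormalizedEquilibrium (fun i => γ i * (σK / σS)) ρ Δt u x) :
    IsEquilibrium σS σK γ ρ Δt (σK / σS * u, fun i => σK / σS * x i / u) := by
  have hs : 0 < σK / σS := div_pos hσK hσS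
  have hu := h.pos
  rw [isEquilibrium_iff_isNormalizedEquilibrium hσS hσK]
  convert h using 1
  · exact mul_div_cancel_left₀ u hs.ne'
  · funext i
    field_simp

lemma IsEquilibrium.unique [Nonempty ι] (hσS : 0 < σS) (hσK : 0 < σK) (hγ : ∀ i, 0 < γ i)
    (hΔt : 0 < Δt) (hρ : ∀ i, ρ i * Δt ≤ 1) {q q' : ℝ × (ι → ℝ)}
    (h : IsEquilibrium σS σK γ ρ Δt q) (h' : IsEquilibrium σS σK γ ρ Δt q') : q = q' := by
  have hs : 0 < σK / σS := div_pos hσK hσS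
  obtain ⟨h_fst, h_snd⟩ := ((isEquilibrium_iff_isNormalizedEquilibrium hσS hσK).1 h).unique
    ((isEquilibrium_iff_isNormalizedEquilibrium hσS hσK).1 h') (fun i => mul_pos (hγ i) hs) hΔt hρ
  have h_sum : q.1 = q'.1 := (div_left_inj' hs.ne').1 h_fst
  refine Prod.ext h_sum (funext fun i => ?_)
  have h_prod := congrFun h_snd i
  rw [div_left_inj' (by positivity), h_sum] at h_prod
  exact mul_right_cancel₀ h'.2.2.1.ne' h_prod

end Equilibrium

/-- Kyle's `λ`, the price impact per unit of order flow when the traders' aggregate response to the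
signal is `b`. -/
noncomputable def priceImpact (σS σK b : ℝ) : ℝ := b * σS ^ 2 / (σK ^ 2 + b ^ 2 * σS ^ 2)

lemma one_sub_priceImpact_mul {σS σK : ℝ} (hσS : 0 < σS) (hσK : 0 < σK) (u : ℝ) :
    1 - priceImpact σS σK (σK / σS * u) * (σK / σS * u) = 1 / (1 + u ^ 2) := by
  unfold priceImpact
  have : 0 < 1 + u ^ 2 := by positivity
  field_simp
  ring

lemma priceImpact_mul_div_one_sub {σS σK u : ℝ} (hσS : 0 < σS) (hσK : 0 < σK) (hu : u ≠ 0)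
    (x : ℝ) : priceImpact σS σK (σK / σS * u) * (σK / σS * x / u) /
      (1 - priceImpact σS σK (σK / σS * u) * (σK / σS * u)) = x := by
  rw [one_sub_priceImpact_mul hσS hσK, priceImpact]
  have : 0 < 1 + u ^ 2 := by positivity
  field_simp

lemma IsNormalizedEquilibrium.one_sub_mul_sq_pos {ι : Type*} [Fintype ι] {c ρ : ι → ℝ} {t u : ℝ}
    {x : ι → ℝ} (h : IsNormalizedEquilibrium c ρ t u x) (hc : ∀ i, 0 < c i) (ht : 0 < t) (i : ι) :
    0 < 1 - (1 - ρ i * t) * x i ^ 2 := by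
  obtain ⟨hx_pos, hx_le⟩ := h.mem_Ioc i
  have hci := hc i
  have hu := h.pos
  have h_factor : 0 < 1 - (1 - ρ i * t) * x i :=
    pos_of_mul_pos_right (h.eq i ▸ by positivity) (sub_nonneg.2 hx_le)
  nlinarith

lemma inventoryCost_add {p x γt : ℝ} (h : 1 - p * x ^ 2 ≠ 0) :
    p * x ^ 2 * γt / (1 - p * x ^ 2) + γt = γt / (1 - p * x ^ 2) := by
  field_simp
  ring

lemma IsNormalizedEquilibrium.valueCoeff_eq {ι : Type*} [Fintype ι] {σS σK t u : ℝ}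
    {γ ρ x : ι → ℝ} (hσS : 0 < σS) (hσK : 0 < σK) (hγ : ∀ i, 0 < γ i) (ht : 0 < t)
    (h : IsNormalizedEquilibrium (fun i => γ i * (σK / σS)) ρ t u x) (i : ι) {βSum lam β φ A : ℝ}
    (hβSum : βSum = σK / σS * u) (hβ : β = σK / σS * x i / u) (hlam : lam = priceImpact σS σK βSum)
    (hφ : φ = 1 - lam * β / (1 - lam * βSum))
    (hA : A = (1 - ρ i * t) * (1 - φ) ^ 2 * γ i * t / (1 - (1 - ρ i * t) * (1 - φ) ^ 2)) :
    (1 - ρ i * t) * β * (2 * (1 - lam * βSum) - β * (A + γ i * t)) =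
      normalizedValueCoeff (σK / σS) (γ i) (ρ i) t u (x i) := by
  have hc : ∀ i, 0 < γ i * (σK / σS) := fun i => mul_pos (hγ i) (div_pos hσK hσS)
  have hφ_eq : 1 - φ = x i := by
    rw [hφ, sub_sub_cancel, hlam, hβSum, hβ, priceImpact_mul_div_one_sub hσS hσK h.pos.ne']
  rw [hA, hφ_eq, mul_assoc _ (γ i) t, inventoryCost_add (h.one_sub_mul_sq_pos hc ht i).ne', hlam,
    hβSum, one_sub_priceImpact_mul hσS hσK, hβ, mul_one_div, normalizedValueCoeff]

section Expansions

variable {ι : Type*} [Fintype ι] [Nonempty ι] {σS σK : ℝ} {γ ρ : ι → ℝ} {u : ℝ → ℝ} {x : ℝ → ι → ℝ}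

lemma hasSqrtExpansion_normalizedValueCoeff {s : ℝ} (hs : 0 < s) (hγ : ∀ i, 0 < γ i)
    (h : ∀ᶠ t in 𝓝[>] 0, IsNormalizedEquilibrium (fun i => γ i * s) ρ t (u t) (x t)) (i : ι) :
    HasSqrtExpansion (fun t => normalizedValueCoeff s (γ i) (ρ i) t (u t) (x t i))
      (2 / (√(Fintype.card ι) * (1 + Fintype.card ι)) * s)
      (1 / (2 * (Fintype.card ι : ℝ) ^ (3 / 4 : ℝ) * (1 + Fintype.card ι) ^ (3 / 2 : ℝ)) *
        slopeForm (fun j => √(γ j)) i * s ^ (3 / 2 : ℝ)) := by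
  convert hasSqrtExpansion_normalizedValueCoeff_responseSlope hs hγ h i using 1
  · ring
  · simp only [responseSlope_mul s (hγ _).le, slopeForm_mul]
    linear_combination -slopeForm (fun j => √(γ j)) i *
      mul_responseSlope_eq (Nat.cast_pos.2 (Fintype.card_pos (α := ι))) hs

lemma hasSqrtExpansion_discountedValueCoeff (hσS : 0 < σS) (hσK : 0 < σK) (hγ : ∀ i, 0 < γ i)
    (h : ∀ᶠ t in 𝓝[>] 0, IsNormalizedEquilibrium (fun i => γ i * (σK / σS)) ρ t (u t) (x t))
    {i : ι} (hρ : ρ i ≠ 0) :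
    HasSqrtExpansion
      (fun t => (1 - ρ i * t) * normalizedValueCoeff (σK / σS) (γ i) (ρ i) t (u t) (x t i) *
        σS ^ 2 / (2 * ρ i))
      (1 / (√(Fintype.card ι) * (1 + Fintype.card ι)) * (σS * σK / ρ i))
      (1 / (4 * (Fintype.card ι : ℝ) ^ (3 / 4 : ℝ) * (1 + Fintype.card ι) ^ (3 / 2 : ℝ)) *
        slopeForm (fun j => √(γ j)) i * (√σS * σK ^ (3 / 2 : ℝ)) / ρ i) := by
  have hB := hasSqrtExpansion_normalizedValueCoeff (div_pos hσK hσS) hγ h i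
  convert (((HasSqrtExpansion.one_sub_const_mul (ρ i)).mul hB).mul (.const (σS ^ 2))).div
    (.const (2 * ρ i)) (mul_ne_zero two_ne_zero hρ) using 1
  · field_simp
  · rw [sqrt_mul_rpow_three_halves hσS hσK]
    field_simp
    ring

end Expansions

theorem stmt11_general {ι : Type*} [Fintype ι] [Nonempty ι] {σS σK : ℝ} (hσS : 0 < σS)
    (hσK : 0 < σK) {γ ρ : ι → ℝ} (hγ : ∀ i, 0 < γ i) (hρ : ∀ i, ρ i ≠ 0) :
    ∃ ε > 0, ∃ C > 0, ∀ Δt : ℝ, 0 < Δt → Δt < ε →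
      ∃ (βSum lam : ℝ) (β φ A B D : ι → ℝ),
        IsEquilibrium σS σK γ ρ Δt (βSum, β) ∧
        (∀ q, IsEquilibrium σS σK γ ρ Δt q → q.1 = βSum ∧ q.2 = β) ∧
        lam = priceImpact σS σK βSum ∧
        (∀ i, φ i = 1 - lam * β i / (1 - lam * βSum)) ∧
        (∀ i, A i = (1 - ρ i * Δt) * (1 - φ i) ^ 2 * γ i * Δt
            / (1 - (1 - ρ i * Δt) * (1 - φ i) ^ 2)) ∧
        (∀ i, B i = (1 - ρ i * Δt) * β i
            * (2 * (1 - lam * βSum) - β i * (A i + γ i * Δt))) ∧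
        (∀ i, D i = (1 - ρ i * Δt) * B i * σS ^ 2 / (2 * ρ i)) ∧
        (∀ i, |B i -
            (2 / (√(Fintype.card ι) * (1 + Fintype.card ι)) * (σK / σS)
              + 1 / (2 * (Fintype.card ι : ℝ) ^ (3 / 4 : ℝ) * (1 + Fintype.card ι) ^ (3 / 2 : ℝ))
                * slopeForm (fun j => √(γ j)) i * (σK / σS) ^ (3 / 2 : ℝ) * √Δt)| ≤ C * Δt) ∧
        (∀ i, |D i -
            (1 / (√(Fintype.card ι) * (1 + Fintype.card ι)) * (σS * σK / ρ i)
              + 1 / (4 * (Fintype.card ι : ℝ) ^ (3 / 4 : ℝ) * (1 + Fintype.card ι) ^ (3 / 2 : ℝ))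
                * slopeForm (fun j => √(γ j)) i * (√σS * σK ^ (3 / 2 : ℝ)) * √Δt / ρ i)|
            ≤ C * Δt) := by
  have hs : 0 < σK / σS := div_pos hσK hσS
  obtain ⟨u, x, hux⟩ := exists_eventually_isNormalizedEquilibrium (fun i => mul_pos (hγ i) hs) ρ
  obtain ⟨C₁, hC₁, hB⟩ := HasSqrtExpansion.exists_forall_abs_sub_le fun i =>
    hasSqrtExpansion_normalizedValueCoeff hs hγ hux i
  obtain ⟨C₂, -, hD⟩ := HasSqrtExpansion.exists_forall_abs_sub_le fun i =>
    hasSqrtExpansion_discountedValueCoeff hσS hσK hγ hux (hρ i)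
  obtain ⟨ε, hε, h_small⟩ := mem_nhdsGT_iff_exists_Ioo_subset.1
    (hux.and ((eventually_forall_mul_le_one ρ).and (hB.and hD)))
  refine ⟨ε, hε, max C₁ C₂, lt_max_of_lt_left hC₁, fun t ht htε => ?_⟩
  obtain ⟨h_eq, hρt, hBt, hDt⟩ := h_small ⟨ht, htε⟩
  have h_value := fun i => h_eq.valueCoeff_eq hσS hσK hγ ht i rfl rfl rfl rfl rfl
  refine ⟨_, _, _, _, _, _, _, h_eq.isEquilibrium hσS hσK, fun q hq => Prod.ext_iff.1 <|
    hq.unique hσS hσK hγ ht hρt (h_eq.isEquilibrium hσS hσK), rfl, fun _ => rfl, fun _ => rfl,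
    fun _ => rfl, fun _ => rfl, fun i => ?_, fun i => ?_⟩
  · rw [h_value]
    exact (hBt i).trans (by gcongr; exact le_max_left _ _)
  · rw [h_value, mul_div_right_comm _ √t]
    exact (hDt i).trans (by gcongr; exact le_max_right _ _)

/-- for small `Δt > 0` and each `i`, the value-function coefficients
`B_i = (1−ρ_iΔt)β_i(2(1−λβ_Σ) − β_i(A_i+γ_iΔt))` and `D_i = (1−ρ_iΔt)B_iσ_S²/(2ρ_i)`
satisfy the stated first-order asymptotic expansions with error `O(Δt)`. -/
theorem stmt11 (k : ℕ) (hk : 1 ≤ k) (σS σK : ℝ) (hσS : 0 < σS) (hσK : 0 < σK)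
    (γ ρ : Fin k → ℝ) (hγ : ∀ i, 0 < γ i) (hρ : ∀ i, 0 < ρ i) :
    ∃ ε > 0, ∃ C > 0, ∀ Δt : ℝ, 0 < Δt → Δt < ε →
      ∃ (βSum lam : ℝ) (β φ A B D : Fin k → ℝ),
        (βSum = ∑ j, β j ∧
          (∀ i, 0 = (1 - ρ i * Δt) * (β i) ^ 2 * βSum ^ 2
              - (2 - ρ i * Δt + βSum * γ i * Δt) * (σK / σS) ^ 2 * β i * βSum
              + (σK / σS) ^ 4 * (1 - β i * γ i * Δt)) ∧
          0 < βSum ∧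
          (∀ i, 0 < β i * βSum ∧ β i * βSum ≤ σK ^ 2 / σS ^ 2)) ∧
        (∀ q : ℝ × (Fin k → ℝ),
          (q.1 = ∑ j, q.2 j ∧
            (∀ i, 0 = (1 - ρ i * Δt) * (q.2 i) ^ 2 * q.1 ^ 2
                - (2 - ρ i * Δt + q.1 * γ i * Δt) * (σK / σS) ^ 2 * q.2 i * q.1
                + (σK / σS) ^ 4 * (1 - q.2 i * γ i * Δt)) ∧
            0 < q.1 ∧
            (∀ i, 0 < q.2 i * q.1 ∧ q.2 i * q.1 ≤ σK ^ 2 / σS ^ 2)) →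
          q.1 = βSum ∧ q.2 = β) ∧
        lam = βSum * σS ^ 2 / (σK ^ 2 + βSum ^ 2 * σS ^ 2) ∧
        (∀ i, φ i = 1 - lam * β i / (1 - lam * βSum)) ∧
        (∀ i, A i = (1 - ρ i * Δt) * (1 - φ i) ^ 2 * γ i * Δt
            / (1 - (1 - ρ i * Δt) * (1 - φ i) ^ 2)) ∧
        (∀ i, B i = (1 - ρ i * Δt) * β i
            * (2 * (1 - lam * βSum) - β i * (A i + γ i * Δt))) ∧
        (∀ i, D i = (1 - ρ i * Δt) * B i * σS ^ 2 / (2 * ρ i)) ∧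
        (∀ i, |B i -
            (2 / (Real.sqrt k * (1 + k)) * (σK / σS)
              + 1 / (2 * (k : ℝ) ^ ((3 : ℝ) / 4) * ((1 : ℝ) + k) ^ ((3 : ℝ) / 2))
                * ((2 + 6 * k) * ((∑ j, Real.sqrt (γ j)) / k)
                    - 5 * (1 + k) * Real.sqrt (γ i))
                * (σK / σS) ^ ((3 : ℝ) / 2) * Real.sqrt Δt)| ≤ C * Δt) ∧
        (∀ i, |D i -
            (1 / (Real.sqrt k * (1 + k)) * (σS * σK / ρ i)
              + 1 / (4 * (k : ℝ) ^ ((3 : ℝ) / 4) * ((1 : ℝ) + k) ^ ((3 : ℝ) / 2))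
                * ((2 + 6 * k) * ((∑ j, Real.sqrt (γ j)) / k)
                    - 5 * (1 + k) * Real.sqrt (γ i))
                * (Real.sqrt σS * σK ^ ((3 : ℝ) / 2)) * Real.sqrt Δt / ρ i)| ≤ C * Δt) := by
  have : Nonempty (Fin k) := Fin.pos_iff_nonempty.1 hk
  simpa only [IsEquilibrium, priceImpact, slopeForm, Fintype.card_fin] using
    stmt11_general hσS hσK hγ fun i => (hρ i).ne'
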